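/- If f″ is essentially bounded on [a,b], then with x = (a+3b)/4 one has | ((b−a)/12)·f′(x) − (1/3)·f(x) − (1/2)·((1/3)f(a) + f(b)) + ((b−a)/16)·(f′(b) − (1/3)f′(a)) + (2/(b−a))·((1/3)∫_a^x f(t)dt + ∫_x^b f(t)dt) | ≤ (b−a)²·‖f″‖_∞/48, where ‖f″‖_∞ denotes the essential supremum of |f″| on [a,b]. -/

import Mathlib

open MeasureTheory intervalIntegral

/-!
Integrating `∫ t in α..β, (t - c) ^ 2 * deriv f' t` by parts twice gives twice the error of a
trapezoid rule with centre `c` and derivative corrections at the endpoints, so a bound `K` on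
`|deriv f'|` bounds that error by `K / 2` times the integral of the kernel `(t - c) ^ 2`.

For `x = (a + 3 * b) / 4`, take the rule on `[a, x]` with centre `(3 * a + b) / 4` and weight `1/3`,
and the rule on `[x, b]` with centre `x` and weight `1`. The expression to be estimated is
`2 / (b - a)` times the weighted sum of the two errors.
-/

open Set

section AbsolutelyContinuous

theorem absolutelyContinuousOnInterval_congr {X : Type*} [PseudoMetricSpace X] {g h : ℝ → X}
    {a b : ℝ} (hg : AbsolutelyContinuousOnInterval g a b) (hgh : EqOn g h (uIcc a b)) :
    AbsolutelyContinuousOnInterval h a b := by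
  rw [absolutelyContinuousOnInterval_iff] at hg ⊢
  intro ε hε
  obtain ⟨δ, hδ, hgδ⟩ := hg ε hε
  refine ⟨δ, hδ, fun E hE hlen ↦ ?_⟩
  have hsum : ∑ i ∈ Finset.range E.1, dist (h (E.2 i).1) (h (E.2 i).2) =
      ∑ i ∈ Finset.range E.1, dist (g (E.2 i).1) (g (E.2 i).2) :=
    Finset.sum_congr rfl fun i hi ↦ by rw [hgh (hE.1 i hi).1, hgh (hE.1 i hi).2]
  exact hsum ▸ hgδ E hE hlen

variable {a b : ℝ} {g g' : ℝ → ℝ}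

theorem absolutelyContinuousOnInterval_of_eq_add_integral (hg' : IntervalIntegrable g' volume a b)
    (hg : ∀ t ∈ uIcc a b, g t = g a + ∫ u in a..t, g' u) :
    AbsolutelyContinuousOnInterval g a b := by
  have hconst : AbsolutelyContinuousOnInterval (fun _ : ℝ ↦ g a) a b :=
    contDiffOn_const.absolutelyContinuousOnInterval
  have hprim := hg'.absolutelyContinuousOnInterval_intervalIntegral (c := a) left_mem_uIcc
  exact absolutelyContinuousOnInterval_congr (hconst.add hprim) fun t ht ↦ (hg t ht).symm

theorem ae_deriv_eq_of_eq_add_integral (hg' : IntervalIntegrable g' volume a b)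
    (hg : ∀ t ∈ uIcc a b, g t = g a + ∫ u in a..t, g' u) :
    ∀ᵐ t ∂volume.restrict (uIcc a b), deriv g t = g' t := by
  rw [uIcc, ← restrict_Ioo_eq_restrict_Icc, ae_restrict_iff' measurableSet_Ioo]
  filter_upwards [hg'.ae_hasDerivAt_integral] with t hderiv ht
  have hlocal : g =ᶠ[nhds t] fun s ↦ g a + ∫ u in a..s, g' u := by
    filter_upwards [Ioo_mem_nhds ht.1 ht.2] with s hs using hg s (Ioo_subset_Icc_self hs)
  rw [hlocal.deriv_eq]
  exact ((hderiv (Ioo_subset_Icc_self ht) a left_mem_uIcc).const_add (g a)).deriv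

end AbsolutelyContinuous

section Kernel

theorem integral_mul_deriv_eq_add_integral_deriv_deriv_mul {f f' p : ℝ → ℝ} {α β : ℝ}
    (hp : ContDiff ℝ 2 p) (hf : ∀ t ∈ uIcc α β, HasDerivWithinAt f (f' t) (uIcc α β) t)
    (hf' : AbsolutelyContinuousOnInterval f' α β) :
    ∫ t in α..β, p t * deriv f' t =
      p β * f' β - p α * f' α - (deriv p β * f β - deriv p α * f α)
        + ∫ t in α..β, deriv (deriv p) t * f t := by
  have hp_ac : AbsolutelyContinuousOnInterval p α β :=
    (hp.of_le one_le_two).contDiffOn.absolutelyContinuousOnInterval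
  have hp' : ContDiff ℝ 1 (deriv p) := hp.deriv'
  have hparts : ∫ t in α..β, deriv p t * f' t =
      deriv p β * f β - deriv p α * f α - ∫ t in α..β, deriv (deriv p) t * f t :=
    integral_mul_deriv_eq_deriv_mul_of_hasDerivWithinAt
      (fun t _ ↦ (hp'.differentiable_one t).hasDerivAt.hasDerivWithinAt) hf
      (hp'.continuous_deriv_one.intervalIntegrable _ _) hf'.continuousOn.intervalIntegrable
  rw [hp_ac.integral_mul_deriv_eq_deriv_mul hf', hparts]
  ring

theorem norm_integral_smul_le_of_ae_norm_le {E : Type*} [NormedAddCommGroup E] [NormedSpace ℝ E]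
    {μ : Measure ℝ} {p : ℝ → ℝ} {g : ℝ → E} {α β K : ℝ} (hαβ : α ≤ β)
    (hp : IntervalIntegrable p μ α β) (hg : ∀ᵐ t ∂μ.restrict (Icc α β), ‖g t‖ ≤ K) :
    ‖∫ t in α..β, p t • g t ∂μ‖ ≤ K * ∫ t in α..β, |p t| ∂μ := by
  rw [← intervalIntegral.integral_const_mul]
  refine norm_integral_le_of_norm_le hαβ ?_ (hp.abs.const_mul K)
  filter_upwards [(ae_restrict_iff' measurableSet_Icc).1 hg] with t ht hmem
  rw [norm_smul, Real.norm_eq_abs, mul_comm]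
  exact mul_le_mul_of_nonneg_right (ht (Ioc_subset_Icc_self hmem)) (abs_nonneg _)

theorem integral_sub_sq (c α β : ℝ) :
    ∫ t in α..β, (t - c) ^ 2 = ((β - c) ^ 3 - (α - c) ^ 3) / 3 := by
  rw [integral_comp_sub_right (fun t ↦ t ^ 2), integral_pow]
  norm_num

end Kernel

section PerturbedTrapezoid

/-- The error on `[α, β]` of the trapezoid rule with centre `c`, which approximates `∫ f` by
`(β - c) * f β + (c - α) * f α`, perturbed by the correction terms in the derivative `f'`. -/
noncomputable def perturbedTrapezoidError (f f' : ℝ → ℝ) (c α β : ℝ) : ℝ :=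
  (∫ t in α..β, f t) - ((β - c) * f β + (c - α) * f α)
    + ((β - c) ^ 2 * f' β - (c - α) ^ 2 * f' α) / 2

variable {f f' : ℝ → ℝ} {a b x c α β K : ℝ}

theorem perturbedTrapezoidError_eq_integral
    (hf : ∀ t ∈ uIcc α β, HasDerivWithinAt f (f' t) (uIcc α β) t)
    (hf' : AbsolutelyContinuousOnInterval f' α β) :
    perturbedTrapezoidError f f' c α β = (∫ t in α..β, (t - c) ^ 2 * deriv f' t) / 2 := by
  have hderiv : deriv (fun t : ℝ ↦ (t - c) ^ 2) = fun t ↦ 2 * (t - c) := by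
    ext t
    simp
  have hderiv₂ : deriv (fun t : ℝ ↦ 2 * (t - c)) = fun _ ↦ 2 := by
    ext t
    simp
  rw [integral_mul_deriv_eq_add_integral_deriv_deriv_mul (by fun_prop) hf hf', hderiv, hderiv₂,
    intervalIntegral.integral_const_mul, perturbedTrapezoidError]
  ring

theorem abs_perturbedTrapezoidError_le (hαβ : α ≤ β)
    (hf : ∀ t ∈ Icc α β, HasDerivWithinAt f (f' t) (Icc α β) t)
    (hf' : AbsolutelyContinuousOnInterval f' α β)
    (hK : ∀ᵐ t ∂volume.restrict (Icc α β), |deriv f' t| ≤ K) :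
    |perturbedTrapezoidError f f' c α β| ≤ K / 6 * ((β - c) ^ 3 + (c - α) ^ 3) := by
  have hsq_int : IntervalIntegrable (fun t : ℝ ↦ (t - c) ^ 2) volume α β :=
    Continuous.intervalIntegrable (by fun_prop) α β
  have hkernel : |∫ t in α..β, (t - c) ^ 2 * deriv f' t| ≤ K * ∫ t in α..β, |(t - c) ^ 2| := by
    simpa only [smul_eq_mul, Real.norm_eq_abs] using
      norm_integral_smul_le_of_ae_norm_le (g := deriv f') hαβ hsq_int hK
  simp only [abs_sq, integral_sub_sq] at hkernel
  rw [← uIcc_of_le hαβ] at hf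
  rw [perturbedTrapezoidError_eq_integral hf hf', abs_div, abs_two]
  linarith

theorem abs_weighted_add_perturbedTrapezoidError_le {v w c d : ℝ} (hv : 0 ≤ v) (hw : 0 ≤ w)
    (hx : x ∈ Icc a b) (hf : ∀ t ∈ Icc a b, HasDerivWithinAt f (f' t) (Icc a b) t)
    (hf' : AbsolutelyContinuousOnInterval f' a b)
    (hK : ∀ᵐ t ∂volume.restrict (Icc a b), |deriv f' t| ≤ K) :
    |v * perturbedTrapezoidError f f' c a x + w * perturbedTrapezoidError f f' d x b| ≤
      K / 6 * (v * ((x - c) ^ 3 + (c - a) ^ 3) + w * ((b - d) ^ 3 + (d - x) ^ 3)) := by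
  have herror {c α β : ℝ} (hαβ : α ≤ β) (hsub : Icc α β ⊆ Icc a b) :
      |perturbedTrapezoidError f f' c α β| ≤ K / 6 * ((β - c) ^ 3 + (c - α) ^ 3) :=
    abs_perturbedTrapezoidError_le hαβ (fun t ht ↦ (hf t (hsub ht)).mono hsub)
      (hf'.mono (by rwa [uIcc_of_le hαβ, uIcc_of_le (hx.1.trans hx.2)]))
      (ae_mono (Measure.restrict_mono hsub le_rfl) hK)
  calc
    _ ≤ v * |perturbedTrapezoidError f f' c a x| + w * |perturbedTrapezoidError f f' d x b| := by
      simpa only [abs_mul, abs_of_nonneg hv, abs_of_nonneg hw] using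
        abs_add_le (v * perturbedTrapezoidError f f' c a x) (w * perturbedTrapezoidError f f' d x b)
    _ ≤ v * (K / 6 * ((x - c) ^ 3 + (c - a) ^ 3)) + w * (K / 6 * ((b - d) ^ 3 + (d - x) ^ 3)) := by
      gcongr
      · exact herror hx.1 (Icc_subset_Icc_right hx.2)
      · exact herror hx.2 (Icc_subset_Icc_left hx.1)
    _ = _ := by ring

theorem quadrature_eq_weighted_add_perturbedTrapezoidError (f f' : ℝ → ℝ) (hab : a ≠ b)
    (hx : x = (a + 3 * b) / 4) :
    ((b - a) / 12) * f' x - (1 / 3) * f x - (1 / 2) * ((1 / 3) * f a + f b)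
        + ((b - a) / 16) * (f' b - (1 / 3) * f' a)
        + (2 / (b - a)) * ((1 / 3) * (∫ t in a..x, f t) + ∫ t in x..b, f t) =
      2 / (b - a) * (1 / 3 * perturbedTrapezoidError f f' ((3 * a + b) / 4) a x
        + 1 * perturbedTrapezoidError f f' x x b) := by
  have hba : b - a ≠ 0 := sub_ne_zero.2 hab.symm
  unfold perturbedTrapezoidError
  -- Protects the arguments `x` from the substitution, which is for the coefficients only.
  generalize f x = fx, f' x = f'x, (∫ t in a..x, f t) = I, (∫ t in x..b, f t) = J
  rw [hx]
  field_simp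
  ring

end PerturbedTrapezoid

theorem stmt_12_general (a b x : ℝ) (f f' f'' : ℝ → ℝ)
    (hab : a < b)
    (hfd : ∀ t ∈ Icc a b, HasDerivWithinAt f (f' t) (Icc a b) t)
    (hf''int : IntervalIntegrable f'' volume a b)
    (hac : ∀ t ∈ Icc a b, f' t = f' a + ∫ u in a..t, f'' u)
    (K : ℝ) (hK : ∀ᵐ t ∂volume.restrict (Icc a b), |f'' t| ≤ K)
    (hx : x = (a + 3 * b) / 4) :
    |((b - a) / 12) * f' x - (1 / 3) * f x - (1 / 2) * ((1 / 3) * f a + f b)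
        + ((b - a) / 16) * (f' b - (1 / 3) * f' a)
        + (2 / (b - a)) * ((1 / 3) * (∫ t in a..x, f t) + ∫ t in x..b, f t)| ≤
      (b - a) ^ 2 * K / 48 := by
  have hderiv_le : ∀ᵐ t ∂volume.restrict (Icc a b), |deriv f' t| ≤ K := by
    rw [← uIcc_of_le hab.le] at hac hK ⊢
    filter_upwards [hK, ae_deriv_eq_of_eq_add_integral hf''int hac] with t ht heq using heq ▸ ht
  have hf' : AbsolutelyContinuousOnInterval f' a b :=
    absolutelyContinuousOnInterval_of_eq_add_integral hf''int (uIcc_of_le hab.le ▸ hac)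
  have hba : 0 < b - a := sub_pos.2 hab
  have hxmem : x ∈ Icc a b := ⟨by linarith, by linarith⟩
  rw [quadrature_eq_weighted_add_perturbedTrapezoidError f f' hab.ne hx, abs_mul,
    abs_of_pos (by positivity : 0 < 2 / (b - a))]
  calc
    _ ≤ 2 / (b - a) * (K / 6 * (1 / 3 * ((x - (3 * a + b) / 4) ^ 3 + ((3 * a + b) / 4 - a) ^ 3)
          + 1 * ((b - x) ^ 3 + (x - x) ^ 3))) := by
      gcongr
      exact abs_weighted_add_perturbedTrapezoidError_le (by norm_num) zero_le_one hxmem hfd hf'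
        hderiv_le
    _ = (b - a) ^ 2 * K / 48 := by
      rw [hx]
      field_simp
      ring

theorem stmt_12 (a b x : ℝ) (f f' f'' : ℝ → ℝ)
    (hab : a < b)
    (hfd : ∀ t ∈ Set.Icc a b, HasDerivAt f (f' t) t)
    (hf''int : IntervalIntegrable f'' MeasureTheory.volume a b)
    (hac : ∀ t ∈ Set.Icc a b, f' t = f' a + ∫ u in a..t, f'' u)
    (K : ℝ) (hK : ∀ᵐ t ∂MeasureTheory.volume.restrict (Set.Icc a b), |f'' t| ≤ K)
    (hx : x = (a + 3 * b) / 4) :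
    |((b - a) / 12) * f' x - (1 / 3) * f x - (1 / 2) * ((1 / 3) * f a + f b)
        + ((b - a) / 16) * (f' b - (1 / 3) * f' a)
        + (2 / (b - a)) * ((1 / 3) * (∫ t in a..x, f t) + ∫ t in x..b, f t)| ≤
      (b - a) ^ 2 * K / 48 :=
  stmt_12_general a b x f f' f'' hab (fun t ht ↦ (hfd t ht).hasDerivWithinAt) hf''int hac K hK hx
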